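/- arXiv:1710.08837 — 2 statements merged into one kernel-verified Lean document; each statement's English description precedes it below -/
import Mathlib

section
/- Let T1 and T2 be distinct torsion classes in tors Λ, and for i ∈ {1,2} let M_i be a minimal extending module for T_i. If Filt(T1 ∪ {M1}) = Filt(T2 ∪ {M2}), then Hom_Λ(M1, M2) = 0 and Hom_Λ(M2, M1) = 0. -/
/-!
Common definitions: the category `mod Λ` of finite(-dimensional) left `Λ`-modules,
torsion(-free) classes, filtration closures, bricks, minimal (co-)extending modules,
and the lattice-theoretic notions for `tors Λ` (ordered by containment).
-/

/-- A bundled (left) `Λ`-module with carrier in `Type`. -/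
structure Mdl (Λ : Type) [Ring Λ] : Type 1 where
  carrier : Type
  [isAddCommGroup : AddCommGroup carrier]
  [isModule : Module Λ carrier]

attribute [instance] Mdl.isAddCommGroup Mdl.isModule

instance {Λ : Type} [Ring Λ] : CoeSort (Mdl Λ) Type :=
  ⟨Mdl.carrier⟩

variable (Λ : Type) [Ring Λ]

/-- Bundle a module. -/
def Mdl.of (X : Type) [AddCommGroup X] [Module Λ X] : Mdl Λ :=
  { carrier := X }

/-- `M` and `N` are isomorphic `Λ`-modules. -/
def MIso (M N : Mdl Λ) : Prop :=
  Nonempty (M.carrier ≃ₗ[Λ] N.carrier)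

/-- `N` is a factor (quotient) module of `M`. -/
def IsFactor (M N : Mdl Λ) : Prop :=
  ∃ f : M.carrier →ₗ[Λ] N.carrier, Function.Surjective f

/-- `N` is a proper factor of `M` (a quotient by a nonzero submodule). -/
def IsProperFactor (M N : Mdl Λ) : Prop :=
  ∃ f : M.carrier →ₗ[Λ] N.carrier, Function.Surjective f ∧ ¬ Function.Injective f

/-- `N` is (isomorphic to) a submodule of `M`. -/
def IsSubmoduleOf (N M : Mdl Λ) : Prop :=
  ∃ f : N.carrier →ₗ[Λ] M.carrier, Function.Injective f

/-- `N` is (isomorphic to) a proper submodule of `M`. -/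
def IsProperSubmoduleOf (N M : Mdl Λ) : Prop :=
  ∃ f : N.carrier →ₗ[Λ] M.carrier, Function.Injective f ∧ ¬ Function.Surjective f

/-- `D` is (isomorphic to) a direct summand of `N`. -/
def IsSummand (D N : Mdl Λ) : Prop :=
  ∃ (i : D.carrier →ₗ[Λ] N.carrier) (p : N.carrier →ₗ[Λ] D.carrier),
    p.comp i = LinearMap.id

/-- `0 → A --f--> M --g--> B → 0` is a short exact sequence. -/
def IsSES {A M B : Mdl Λ} (f : A.carrier →ₗ[Λ] M.carrier)
    (g : M.carrier →ₗ[Λ] B.carrier) : Prop :=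
  Function.Injective f ∧ Function.Surjective g ∧ LinearMap.range f = LinearMap.ker g

/-- The short exact sequence `0 → A --f--> M --g--> B → 0` splits. -/
def SplitsSES {A M B : Mdl Λ} (_f : A.carrier →ₗ[Λ] M.carrier)
    (g : M.carrier →ₗ[Λ] B.carrier) : Prop :=
  ∃ s : B.carrier →ₗ[Λ] M.carrier, g.comp s = LinearMap.id

/-- `M` is an extension of `B` by `A`, i.e. there is a s.e.s. `0 → A → M → B → 0`. -/
def ExtOf (M A B : Mdl Λ) : Prop :=
  ∃ (f : A.carrier →ₗ[Λ] M.carrier) (g : M.carrier →ₗ[Λ] B.carrier), IsSES Λ f g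

/-- A torsion class in `mod Λ`: a class of finite(-dimensional) modules containing `0`
and closed under isomorphisms, factor modules and extensions. -/
structure IsTorsionClass (T : Set (Mdl Λ)) : Prop where
  fin : ∀ M ∈ T, Module.Finite Λ M.carrier
  zero_mem : ∀ M : Mdl Λ, Subsingleton M.carrier → M ∈ T
  iso_closed : ∀ M ∈ T, ∀ N : Mdl Λ, MIso Λ M N → N ∈ T
  factor_closed : ∀ M ∈ T, ∀ N : Mdl Λ, IsFactor Λ M N → N ∈ T
  ext_closed : ∀ A ∈ T, ∀ B ∈ T, ∀ M : Mdl Λ, ExtOf Λ M A B → M ∈ T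

/-- A torsion-free class in `mod Λ`: a class of finite(-dimensional) modules containing `0`
and closed under isomorphisms, submodules and extensions. -/
structure IsTorsionFreeClass (F : Set (Mdl Λ)) : Prop where
  fin : ∀ M ∈ F, Module.Finite Λ M.carrier
  zero_mem : ∀ M : Mdl Λ, Subsingleton M.carrier → M ∈ F
  iso_closed : ∀ M ∈ F, ∀ N : Mdl Λ, MIso Λ M N → N ∈ F
  sub_closed : ∀ M ∈ F, ∀ N : Mdl Λ, IsSubmoduleOf Λ N M → N ∈ F
  ext_closed : ∀ A ∈ F, ∀ B ∈ F, ∀ M : Mdl Λ, ExtOf Λ M A B → M ∈ F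

/-- `Filt S M`: `M` admits a filtration `0 = M₀ ⊆ M₁ ⊆ ⋯ ⊆ M_l = M` whose successive
quotients are isomorphic to modules in `S`. -/
inductive Filt (S : Set (Mdl Λ)) : Mdl Λ → Prop
  | of_subsingleton (M : Mdl Λ) (h : Subsingleton M.carrier) : Filt S M
  | step (M : Mdl Λ) (N : Submodule Λ M.carrier) (X : Mdl Λ) (hX : X ∈ S)
      (hN : Filt S (Mdl.of Λ N)) (e : Nonempty ((M.carrier ⧸ N) ≃ₗ[Λ] X.carrier)) :
      Filt S M

/-- The filtration closure `Filt(S)` as a set of modules. -/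
def FiltSet (S : Set (Mdl Λ)) : Set (Mdl Λ) := {M | Filt Λ S M}

/-- `Gen(M)`: the class of factor modules of finite direct sums of copies of `M`. -/
def GenSet (M : Mdl Λ) : Set (Mdl Λ) :=
  {N | ∃ (n : ℕ) (f : (Fin n → M.carrier) →ₗ[Λ] N.carrier), Function.Surjective f}

/-- `T^⊥ = {X ∈ mod Λ : Hom_Λ(N, X) = 0 for all N ∈ T}`. -/
def Perp (T : Set (Mdl Λ)) : Set (Mdl Λ) :=
  {X | Module.Finite Λ X.carrier ∧ ∀ N ∈ T, ∀ f : N.carrier →ₗ[Λ] X.carrier, f = 0}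

/-- A brick: a module (in `mod Λ`) whose endomorphism ring is a division ring,
i.e. it is nonzero and every nonzero endomorphism is invertible. -/
def IsBrick (M : Mdl Λ) : Prop :=
  Module.Finite Λ M.carrier ∧ Nontrivial M.carrier ∧
    ∀ f : M.carrier →ₗ[Λ] M.carrier, f ≠ 0 → Function.Bijective f

/-- An indecomposable module: nonzero, and not the direct sum of two nonzero submodules. -/
def Indec (M : Mdl Λ) : Prop :=
  Nontrivial M.carrier ∧
    ∀ p q : Submodule Λ M.carrier, IsCompl p q → p = ⊥ ∨ q = ⊥

/-- `M` is a minimal extending module for the torsion class `T`: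
(P1) every proper factor of `M` is in `T`;
(P2) if `0 → M → X → N → 0` is non-split exact with `N ∈ T`, then `X ∈ T`;
(P3) `Hom_Λ(T, M) = 0`. -/
structure IsMinExt (T : Set (Mdl Λ)) (M : Mdl Λ) : Prop where
  fin : Module.Finite Λ M.carrier
  p1 : ∀ N : Mdl Λ, IsProperFactor Λ M N → N ∈ T
  p2 : ∀ (X N : Mdl Λ) (f : M.carrier →ₗ[Λ] X.carrier) (g : X.carrier →ₗ[Λ] N.carrier),
      IsSES Λ f g → ¬ SplitsSES Λ f g → N ∈ T → X ∈ T
  p3 : ∀ N ∈ T, ∀ f : N.carrier →ₗ[Λ] M.carrier, f = 0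

/-- `M` is a minimal co-extending module for the torsion-free class `F`:
(P1') every proper submodule of `M` is in `F`;
(P2') if `0 → F' → X → M → 0` is non-split exact with `F' ∈ F`, then `X ∈ F`;
(P3') `Hom_Λ(M, F) = 0`. -/
structure IsMinCoExt (F : Set (Mdl Λ)) (M : Mdl Λ) : Prop where
  fin : Module.Finite Λ M.carrier
  p1 : ∀ N : Mdl Λ, IsProperSubmoduleOf Λ N M → N ∈ F
  p2 : ∀ (X F' : Mdl Λ) (f : F'.carrier →ₗ[Λ] X.carrier) (g : X.carrier →ₗ[Λ] M.carrier),
      IsSES Λ f g → ¬ SplitsSES Λ f g → F' ∈ F → X ∈ F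
  p3 : ∀ F' ∈ F, ∀ f : M.carrier →ₗ[Λ] F'.carrier, f = 0

/-- `T'` covers `T` in the lattice `tors Λ` of torsion classes ordered by containment. -/
def TorsCovers (T' T : Set (Mdl Λ)) : Prop :=
  IsTorsionClass Λ T' ∧ IsTorsionClass Λ T ∧ T ⊂ T' ∧
    ∀ Y : Set (Mdl Λ), IsTorsionClass Λ Y → T ⊂ Y → Y ⊆ T' → Y = T'

/-- `F'` covers `F` in the lattice `torf Λ` of torsion-free classes ordered by containment. -/
def TorfCovers (F' F : Set (Mdl Λ)) : Prop :=
  IsTorsionFreeClass Λ F' ∧ IsTorsionFreeClass Λ F ∧ F ⊂ F' ∧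
    ∀ Y : Set (Mdl Λ), IsTorsionFreeClass Λ Y → F ⊂ Y → Y ⊆ F' → Y = F'

/-- The join `⋁ A` of a family of torsion classes in `tors Λ`: the smallest torsion
class containing all members of `A`. -/
def TorsJoin (A : Set (Set (Mdl Λ))) : Set (Mdl Λ) :=
  ⋂₀ {T : Set (Mdl Λ) | IsTorsionClass Λ T ∧ ∀ S ∈ A, S ⊆ T}

/-- A completely join-irreducible element of `tors Λ`: a torsion class `T` such that
`T ∈ A` whenever `A` is a set of torsion classes with `⋁ A = T`. -/
def CompletelyJoinIrred (T : Set (Mdl Λ)) : Prop :=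
  IsTorsionClass Λ T ∧
    ∀ A : Set (Set (Mdl Λ)), (∀ S ∈ A, IsTorsionClass Λ S) → TorsJoin Λ A = T → T ∈ A

/-- The join representation `⋁ A` is irredundant in `tors Λ`:
every proper subset has strictly smaller join. -/
def TorsIrredundant (A : Set (Set (Mdl Λ))) : Prop :=
  ∀ B : Set (Set (Mdl Λ)), B ⊂ A → TorsJoin Λ B ⊂ TorsJoin Λ A

/-- `A` is the canonical join representation of its join in `tors Λ` (equivalently, a face
of the canonical join complex `Γ(tors Λ)`): `⋁ A` is irredundant, and `A ≪ B` for every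
irredundant join representation `⋁ B` of the same element. -/
def TorsCJR (A : Set (Set (Mdl Λ))) : Prop :=
  (∀ S ∈ A, IsTorsionClass Λ S) ∧ TorsIrredundant Λ A ∧
    ∀ B : Set (Set (Mdl Λ)), (∀ S ∈ B, IsTorsionClass Λ S) →
      TorsJoin Λ B = TorsJoin Λ A → TorsIrredundant Λ B → ∀ a ∈ A, ∃ b ∈ B, a ⊆ b

/-- `M` and `N` are hom-orthogonal: `Hom_Λ(M, N) = 0` and `Hom_Λ(N, M) = 0`. -/
def HomOrthogonal (M N : Mdl Λ) : Prop :=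
  (∀ f : M.carrier →ₗ[Λ] N.carrier, f = 0) ∧ ∀ f : N.carrier →ₗ[Λ] M.carrier, f = 0

/-- Either in `T` or surjecting onto `M`. -/
def TorsOrSurj (T : Set (Mdl Λ)) (M X : Mdl Λ) : Prop :=
  X ∈ T ∨ ∃ p : X.carrier →ₗ[Λ] M.carrier, Function.Surjective p

theorem torsOrSurj_ext {T : Set (Mdl Λ)} (hT : IsTorsionClass Λ T) {M : Mdl Λ}
    (hM : IsMinExt Λ T M) {S X Y : Mdl Λ} (hS : S ∈ insert M T)
    (f : S.carrier →ₗ[Λ] X.carrier) (g : X.carrier →ₗ[Λ] Y.carrier) (h : IsSES Λ f g)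
    (hY : TorsOrSurj Λ T M Y) : TorsOrSurj Λ T M X := by
  rcases hY with hY | ⟨p, hp⟩
  · rcases hS with rfl | hS
    · by_cases hs : SplitsSES Λ f g
      · right
        have hex : Function.Exact f g := by
          rw [LinearMap.exact_iff]; exact h.2.2.symm
        obtain ⟨s, hs⟩ := hs
        have hl : Function.Surjective g ∧ ∃ l, l ∘ₗ f = LinearMap.id :=
by
          have hi : Function.Injective f ∧ ∃ l, g ∘ₗ l = LinearMap.id := ⟨h.1, s, hs⟩
          have ht := hex.split_tfae'.out 0 1
          exact ht.1 hi
        obtain ⟨-, l, hl⟩ := hl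
        exact ⟨l, fun m => ⟨f m, by simpa using LinearMap.congr_fun hl m⟩⟩
      · exact Or.inl (hM.p2 X Y f g h hs hY)
    · exact Or.inl (hT.ext_closed S hS Y hY X ⟨f, g, h⟩)
  · exact Or.inr ⟨p.comp g, hp.comp h.2.1⟩

theorem torsOrSurj_filt_ext {T : Set (Mdl Λ)} (hT : IsTorsionClass Λ T) {M : Mdl Λ}
    (hM : IsMinExt Λ T M) {N : Mdl Λ} (hN : Filt Λ (insert M T) N) :
    ∀ (X Y : Mdl Λ) (f : N.carrier →ₗ[Λ] X.carrier) (g : X.carrier →ₗ[Λ] Y.carrier),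
      IsSES Λ f g → TorsOrSurj Λ T M Y → TorsOrSurj Λ T M X := by
  induction hN with
  | of_subsingleton N hN =>
    intro X Y f g h hY
    exact torsOrSurj_ext Λ hT hM (Or.inr (hT.zero_mem N hN)) f g h hY
  | step N N' S hS hN' e ih =>
    intro X Y f g h hY
    obtain ⟨e⟩ := e
    obtain ⟨hf, hg, hfg⟩ := h
    let K : Submodule Λ X.carrier := N'.map f
    have hK : K ≤ LinearMap.ker g := by
      rw [← hfg]; exact LinearMap.map_le_range
    let a : (N.carrier ⧸ N') →ₗ[Λ] (X.carrier ⧸ K) :=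
      Submodule.mapQ N' K f (Submodule.le_comap_map f N')
    let b : (X.carrier ⧸ K) →ₗ[Λ] Y.carrier := K.liftQ g hK
    have key : TorsOrSurj Λ T M (Mdl.of Λ (X.carrier ⧸ K)) := by
      refine torsOrSurj_ext Λ hT hM (X := Mdl.of Λ (X.carrier ⧸ K)) hS
        (a.comp e.symm.toLinearMap) b ⟨?_, ?_, ?_⟩ hY
      · refine Function.Injective.comp (g := a) ?_ e.symm.injective
        rw [← LinearMap.ker_eq_bot, Submodule.ker_mapQ,
          Submodule.comap_map_eq_of_injective hf, Submodule.mkQ_map_self]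
      · intro y
        obtain ⟨x, rfl⟩ := hg y
        exact ⟨K.mkQ x, Submodule.liftQ_apply K g x⟩
      · have h1 : LinearMap.range (a.comp e.symm.toLinearMap) = LinearMap.range a :=
          LinearMap.range_comp_of_range_eq_top _ (LinearEquiv.range _)
        have h2 : LinearMap.range a = LinearMap.ker b := by
          rw [Submodule.range_mapQ, Submodule.ker_liftQ, hfg]
        exact h1.trans h2
    refine ih X (Mdl.of Λ (X.carrier ⧸ K)) (f.comp N'.subtype) K.mkQ ⟨?_, ?_, ?_⟩ key
    · exact hf.comp N'.injective_subtype
    · exact K.mkQ_surjective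
    · have h1 : LinearMap.range (f.comp N'.subtype) = K := by
        rw [LinearMap.range_comp, Submodule.range_subtype]
      exact h1.trans K.ker_mkQ.symm

theorem torsOrSurj_filt {T : Set (Mdl Λ)} (hT : IsTorsionClass Λ T) {M : Mdl Λ}
    (hM : IsMinExt Λ T M) {N : Mdl Λ} (hN : Filt Λ (insert M T) N) :
    TorsOrSurj Λ T M N := by
  refine torsOrSurj_filt_ext Λ hT hM hN N (Mdl.of Λ PUnit) LinearMap.id 0 ⟨?_, ?_, ?_⟩
    (Or.inl (hT.zero_mem _ (inferInstanceAs (Subsingleton PUnit))))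
  · exact Function.injective_id
  · exact fun y => ⟨0, rfl⟩
  · rw [LinearMap.range_id, LinearMap.ker_zero]

theorem filt_of_mem {S : Set (Mdl Λ)} {X : Mdl Λ} (hX : X ∈ S) : Filt Λ S X :=
  Filt.step X ⊥ X hX
    (Filt.of_subsingleton _ (inferInstanceAs (Subsingleton (⊥ : Submodule Λ X.carrier))))
    ⟨Submodule.quotEquivOfEqBot ⊥ rfl⟩

theorem filt_le {S T : Set (Mdl Λ)} (hT : IsTorsionClass Λ T) (hST : S ⊆ T) {X : Mdl Λ}
    (hX : Filt Λ S X) : X ∈ T := by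
  induction hX with
  | of_subsingleton X h => exact hT.zero_mem X h
  | step X N Y hY hN e ih =>
    obtain ⟨e⟩ := e
    refine hT.ext_closed _ ih Y (hST hY) X
      ⟨N.subtype, e.toLinearMap.comp N.mkQ, N.injective_subtype, ?_, ?_⟩
    · exact e.surjective.comp N.mkQ_surjective
    · have h1 : LinearMap.ker (e.toLinearMap.comp N.mkQ) = N := by
        rw [LinearEquiv.ker_comp, Submodule.ker_mkQ]
      exact N.range_subtype.trans h1.symm

theorem tors_le_aux {T T' : Set (Mdl Λ)} (hT' : IsTorsionClass Λ T') {M M' : Mdl Λ}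
    (hM : IsMinExt Λ T M) (hM' : IsMinExt Λ T' M')
    (hle : T ⊆ FiltSet Λ (insert M' T')) (hn : Nontrivial M.carrier)
    (g : M'.carrier →ₗ[Λ] M.carrier) (hg : Function.Surjective g) : T ⊆ T' := by
  intro X hX
  rcases torsOrSurj_filt Λ hT' hM' (hle hX) with h | ⟨p, hp⟩
  · exact h
  · exfalso
    have h0 := hM.p3 X hX (g.comp p)
    obtain ⟨m, hm⟩ := exists_ne (0 : M.carrier)
    obtain ⟨x, rfl⟩ := (hg.comp hp) m
    exact hm (LinearMap.congr_fun h0 x)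

theorem hom_zero_aux (T1 T2 : Set (Mdl Λ))
    (hT1 : IsTorsionClass Λ T1) (hT2 : IsTorsionClass Λ T2) (hne : T1 ≠ T2)
    (M1 M2 : Mdl Λ) (hM1 : IsMinExt Λ T1 M1) (hM2 : IsMinExt Λ T2 M2)
    (heq : FiltSet Λ (insert M1 T1) = FiltSet Λ (insert M2 T2))
    (f : M1.carrier →ₗ[Λ] M2.carrier) : f = 0 := by
  by_contra hf
  obtain ⟨m, hm⟩ : ∃ m, f m ≠ 0 := by
    by_contra! h
    exact hf (LinearMap.ext h)
  have n2 : Nontrivial M2.carrier := ⟨⟨_, _, hm⟩⟩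
  have hm' : m ≠ 0 := fun h => hm (by rw [h, map_zero])
  have n1 : Nontrivial M1.carrier := ⟨⟨_, _, hm'⟩⟩
  have mem1 : M1 ∈ FiltSet Λ (insert M1 T1) := filt_of_mem Λ (Or.inl rfl)
  have le1 : T1 ⊆ FiltSet Λ (insert M1 T1) := fun X hX => filt_of_mem Λ (Or.inr hX)
  have le2 : T2 ⊆ FiltSet Λ (insert M2 T2) := fun X hX => filt_of_mem Λ (Or.inr hX)
  have mem1' := mem1
  rw [heq] at mem1'
  rcases torsOrSurj_filt Λ hT2 hM2 mem1' with h | ⟨g, hg⟩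
  · exact hf (hM2.p3 M1 h f)
  have h21 : T2 ⊆ T1 := tors_le_aux Λ hT1 hM2 hM1 (heq ▸ le2) n2 g hg
  by_cases hi : Function.Injective g
  · let e := LinearEquiv.ofBijective g ⟨hi, hg⟩
    have h12 : T1 ⊆ T2 :=
      tors_le_aux Λ hT2 hM1 hM2 (heq ▸ le1) n1 e.symm.toLinearMap e.symm.surjective
    exact hne (h12.antisymm h21)
  · have hM2T : M2 ∈ T1 := hM1.p1 M2 ⟨g, hg, hi⟩
    have : M1 ∈ T1 := filt_le Λ hT1 (Set.insert_subset hM2T h21) mem1'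
    exact hm' (LinearMap.congr_fun (hM1.p3 M1 this LinearMap.id) m)

/-- Let `T₁ ≠ T₂` be torsion classes and `Mᵢ` a minimal extending
module for `Tᵢ` (`i = 1, 2`).  If `Filt(T₁ ∪ {M₁}) = Filt(T₂ ∪ {M₂})`, then
`Hom_Λ(M₁, M₂) = 0` and `Hom_Λ(M₂, M₁) = 0`. -/
theorem statement11 (k : Type) [Field k] (Λ : Type) [Ring Λ] [Algebra k Λ]
    [FiniteDimensional k Λ] (T1 T2 : Set (Mdl Λ))
    (hT1 : IsTorsionClass Λ T1) (hT2 : IsTorsionClass Λ T2) (hne : T1 ≠ T2)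
    (M1 M2 : Mdl Λ) (hM1 : IsMinExt Λ T1 M1) (hM2 : IsMinExt Λ T2 M2)
    (heq : FiltSet Λ (insert M1 T1) = FiltSet Λ (insert M2 T2)) :
    (∀ f : M1.carrier →ₗ[Λ] M2.carrier, f = 0) ∧
      (∀ f : M2.carrier →ₗ[Λ] M1.carrier, f = 0) := by
  exact ⟨hom_zero_aux Λ T1 T2 hT1 hT2 hne M1 M2 hM1 hM2 heq,
    hom_zero_aux Λ T2 T1 hT2 hT1 hne.symm M2 M1 hM2 hM1 heq.symm⟩
end

section
/- Let E be a collection of bricks over Λ. If the set {Filt(Gen(M)) : M ∈ E} is a canonical join representation in tors Λ (i.e. ⋁{Filt(Gen(M)) : M ∈ E} is the canonical join representation of its join), then every pair of modules M, M' in E is hom-orthogonal: Hom_Λ(M, M') = 0 and Hom_Λ(M', M) = 0. -/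
variable (Λ : Type) [Ring Λ]

theorem x_finTors : IsTorsionClass Λ {M : Mdl Λ | Module.Finite Λ M.carrier} where
  fin := fun _ h => h
  zero_mem := fun M h => by
    have := h
    exact (inferInstance : Module.Finite Λ M.carrier)
  iso_closed := fun M h N ⟨e⟩ => by
    have : Module.Finite Λ M.carrier := h
    exact Module.Finite.equiv e
  factor_closed := fun M h N ⟨f, hf⟩ => by
    have : Module.Finite Λ M.carrier := h
    exact Module.Finite.of_surjective f hf
  ext_closed := fun A hA B hB M ⟨f, g, _, hg, hfg⟩ => by
    have h1 : Module.Finite Λ A.carrier := hA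
    have h2 : Module.Finite Λ B.carrier := hB
    show Module.Finite Λ M.carrier
    refine ⟨Submodule.fg_of_fg_map_of_fg_inf_ker g (s := ⊤) ?_ ?_⟩
    · rw [Submodule.map_top, LinearMap.range_eq_top.2 hg]
      exact h2.1
    · rw [top_inf_eq, ← hfg, LinearMap.range_eq_map]
      exact h1.1.map f

theorem x_joinTors (A : Set (Set (Mdl Λ))) (hA : ∀ S ∈ A, ∀ M ∈ S, Module.Finite Λ M.carrier) :
    IsTorsionClass Λ (TorsJoin Λ A) where
  fin := fun M h => h _ ⟨x_finTors Λ, fun S hS N hN => hA S hS N hN⟩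
  zero_mem := fun M h T hT => hT.1.zero_mem M h
  iso_closed := fun M h N e T hT => hT.1.iso_closed M (h T hT) N e
  factor_closed := fun M h N e T hT => hT.1.factor_closed M (h T hT) N e
  ext_closed := fun A hA B hB M e T hT => hT.1.ext_closed A (hA T hT) B (hB T hT) M e

theorem x_joinLe {A : Set (Set (Mdl Λ))} {T : Set (Mdl Λ)} (hT : IsTorsionClass Λ T)
    (h : ∀ S ∈ A, S ⊆ T) : TorsJoin Λ A ⊆ T := fun _ hM => hM T ⟨hT, h⟩

theorem x_leJoin {A : Set (Set (Mdl Λ))} {S : Set (Mdl Λ)} (h : S ∈ A) :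
    S ⊆ TorsJoin Λ A := fun _ hM _ hT => hT.2 S h hM

theorem x_pow {T : Set (Mdl Λ)} (hT : IsTorsionClass Λ T) {M : Mdl Λ} (hM : M ∈ T) (n : ℕ) :
    Mdl.of Λ (Fin n → M.carrier) ∈ T := by
  induction n with
  | zero => exact hT.zero_mem _ (inferInstanceAs (Subsingleton (Fin 0 → M.carrier)))
  | succ n ih =>
    have h2 : Mdl.of Λ (M.carrier × (Fin n → M.carrier)) ∈ T := by
      refine hT.ext_closed M hM _ ih _ ⟨LinearMap.inl Λ M.carrier (Fin n → M.carrier),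
        LinearMap.snd Λ M.carrier (Fin n → M.carrier), ?_, ?_, ?_⟩
      · exact LinearMap.inl_injective (R := Λ) (M := M.carrier) (M₂ := Fin n → M.carrier)
      · exact LinearMap.snd_surjective (R := Λ) (M := M.carrier) (M₂ := Fin n → M.carrier)
      · exact LinearMap.range_inl Λ M.carrier (Fin n → M.carrier)
    exact hT.iso_closed _ h2 _ ⟨Fin.consLinearEquiv Λ (fun _ : Fin (n+1) => M.carrier)⟩

theorem x_filtLe {T : Set (Mdl Λ)} (hT : IsTorsionClass Λ T) {M : Mdl Λ} (hM : M ∈ T) :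
    FiltSet Λ (GenSet Λ M) ⊆ T := by
  intro X hX
  induction hX with
  | of_subsingleton X h => exact hT.zero_mem X h
  | step X N Y hY _ e ih =>
    obtain ⟨n, f, hf⟩ := hY
    obtain ⟨e⟩ := e
    have hYT : Y ∈ T := hT.factor_closed _ (x_pow Λ hT hM n) Y ⟨f, hf⟩
    refine hT.ext_closed _ ih Y hYT X ⟨N.subtype, e.toLinearMap.comp N.mkQ,
      N.injective_subtype, ?_, ?_⟩
    · exact e.surjective.comp N.mkQ_surjective
    · rw [LinearEquiv.ker_comp]
      exact N.range_subtype.trans N.ker_mkQ.symm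

theorem x_self (M : Mdl Λ) : M ∈ FiltSet Λ (GenSet Λ M) := by
  refine Filt.step M ⊥ M ⟨1, LinearMap.proj 0, fun x => ⟨fun _ => x, rfl⟩⟩
    (Filt.of_subsingleton _ (inferInstanceAs (Subsingleton (⊥ : Submodule Λ M.carrier))))
    ⟨Submodule.quotEquivOfEqBot ⊥ rfl⟩

def xU (N : Mdl Λ) : Set (Mdl Λ) :=
  {X | Module.Finite Λ X.carrier ∧ ∀ Y : Mdl Λ, (∀ h : N.carrier →ₗ[Λ] Y.carrier, h = 0) →
    ∀ g : X.carrier →ₗ[Λ] Y.carrier, g = 0}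

theorem x_factor {N X Y : Mdl Λ} (f : X.carrier →ₗ[Λ] Y.carrier) (hf : Function.Surjective f)
    (h : X ∈ xU Λ N) : Y ∈ xU Λ N := by
  refine ⟨(x_finTors Λ).factor_closed X h.1 Y ⟨f, hf⟩, fun Z hZ g => ?_⟩
  have := h.2 Z hZ (g.comp f)
  ext y
  obtain ⟨x, rfl⟩ := hf y
  exact LinearMap.congr_fun this x

theorem xU_tors (N : Mdl Λ) : IsTorsionClass Λ (xU Λ N) where
  fin := fun _ h => h.1
  zero_mem := fun M h => ⟨(x_finTors Λ).zero_mem M h, fun Y _ g => by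
    ext x
    rw [Subsingleton.elim x 0]; simp⟩
  iso_closed := fun _ h _ ⟨e⟩ => x_factor Λ e.toLinearMap e.surjective h
  factor_closed := fun _ h _ ⟨f, hf⟩ => x_factor Λ f hf h
  ext_closed := fun A hA B hB M e => by
    refine ⟨(x_finTors Λ).ext_closed A hA.1 B hB.1 M e, fun Y hY g => ?_⟩
    obtain ⟨f, p, _, hp, hfp⟩ := e
    have h1 := hA.2 Y hY (g.comp f)
    have hk : LinearMap.ker p ≤ LinearMap.ker g := by
      rw [← hfp]
      rintro _ ⟨a, rfl⟩
      exact LinearMap.congr_fun h1 a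
    let e := p.quotKerEquivOfSurjective hp
    have h2 := hB.2 Y hY (((LinearMap.ker p).liftQ g hk).comp e.symm.toLinearMap)
    ext x
    have h3 := LinearMap.congr_fun h2 (p x)
    have h4 : e.symm (p x) = (LinearMap.ker p).mkQ x := by
      rw [LinearEquiv.symm_apply_eq]; rfl
    simpa [h4] using h3

theorem xU_self {N : Mdl Λ} (h : Module.Finite Λ N.carrier) : N ∈ xU Λ N :=
  ⟨h, fun _ hY g => hY g⟩

theorem xU_exists {N X : Mdl Λ} (h : X ∈ xU Λ N) (hX : Nontrivial X.carrier) :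
    ∃ f : N.carrier →ₗ[Λ] X.carrier, f ≠ 0 := by
  by_contra! hc
  have h1 := h.2 X hc LinearMap.id
  obtain ⟨x, hx⟩ := exists_ne (0 : X.carrier)
  exact hx (LinearMap.congr_fun h1 x)

/-- Nonzero maps from `T(M)` to the brick `M` are surjective. -/
theorem x_surj {M X : Mdl Λ} (hM : IsBrick Λ M) (hX : X ∈ xU Λ M)
    (f : X.carrier →ₗ[Λ] M.carrier) (hf : f ≠ 0) : Function.Surjective f := by
  have hR : Mdl.of Λ (LinearMap.range f) ∈ xU Λ M :=
    x_factor Λ (Y := Mdl.of Λ (LinearMap.range f)) f.rangeRestrict f.surjective_rangeRestrict hX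
  have hn : Nontrivial (LinearMap.range f) := by
    rw [Submodule.nontrivial_iff_ne_bot]
    simpa [LinearMap.range_eq_bot] using hf
  obtain ⟨g, hg⟩ := xU_exists Λ hR hn
  let g' : M.carrier →ₗ[Λ] LinearMap.range f := g
  have hg' : g' ≠ 0 := hg
  have h1 : (LinearMap.range f).subtype.comp g' ≠ 0 := by
    intro h
    apply hg'
    ext x
    exact LinearMap.congr_fun h x
  intro y
  obtain ⟨x, rfl⟩ := (hM.2.2 _ h1).2 y
  exact (g' x).2

theorem x_iso {M M' : Mdl Λ} (hM : IsBrick Λ M) (hM' : IsBrick Λ M')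
    (h : FiltSet Λ (GenSet Λ M) = FiltSet Λ (GenSet Λ M')) : MIso Λ M M' := by
  have h1 : M' ∈ xU Λ M :=
    x_filtLe Λ (xU_tors Λ M) (xU_self Λ hM.1) (h ▸ x_self Λ M')
  have h2 : M ∈ xU Λ M' :=
    x_filtLe Λ (xU_tors Λ M') (xU_self Λ hM'.1) (h ▸ x_self Λ M)
  obtain ⟨f, hf⟩ := xU_exists Λ h1 hM'.2.1
  obtain ⟨g, hg⟩ := xU_exists Λ h2 hM.2.1
  have hfs := x_surj Λ hM' h2 f hf
  have hgs := x_surj Λ hM h1 g hg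
  have hs : Function.Surjective (g.comp f) := hgs.comp hfs
  have h0 : g.comp f ≠ 0 := by
    intro h0
    have := hM.2.1
    obtain ⟨x, hx⟩ := exists_ne (0 : M.carrier)
    obtain ⟨y, rfl⟩ := hs x
    exact hx (LinearMap.congr_fun h0 y)
  have hi : Function.Injective (g ∘ f) := (hM.2.2 _ h0).1
  exact ⟨LinearEquiv.ofBijective f ⟨hi.of_comp, hfs⟩⟩

theorem x_main (E : Set (Mdl Λ)) (hE : ∀ M ∈ E, IsBrick Λ M)
    (hnoniso : ∀ M ∈ E, ∀ M' ∈ E, M ≠ M' → ¬ MIso Λ M M')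
    (hcjr : TorsCJR Λ ((fun M : Mdl Λ => FiltSet Λ (GenSet Λ M)) '' E))
    (M : Mdl Λ) (hM : M ∈ E) (M' : Mdl Λ) (hM' : M' ∈ E) (hne : M ≠ M')
    (f : M.carrier →ₗ[Λ] M'.carrier) : f = 0 := by
  by_contra hf
  set A := (fun M : Mdl Λ => FiltSet Λ (GenSet Λ M)) '' E with hAdef
  obtain ⟨hAt, hirr, hcan⟩ := hcjr
  have hMA : FiltSet Λ (GenSet Λ M) ∈ A := ⟨M, hM, rfl⟩
  have hMA' : FiltSet Λ (GenSet Λ M') ∈ A := ⟨M', hM', rfl⟩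
  have hneT : FiltSet Λ (GenSet Λ M) ≠ FiltSet Λ (GenSet Λ M') := fun h =>
    hnoniso M hM M' hM' hne (x_iso Λ (hE M hM) (hE M' hM') h)
  have hT : IsTorsionClass Λ (TorsJoin Λ A) := x_joinTors Λ A fun S hS => (hAt S hS).fin
  set A' := A \ {FiltSet Λ (GenSet Λ M')} with hA'
  have hJ : IsTorsionClass Λ (TorsJoin Λ A') :=
    x_joinTors Λ A' fun S hS => (hAt S hS.1).fin
  have hJT : TorsJoin Λ A' ⊆ TorsJoin Λ A :=
    x_joinLe Λ hT fun S hS => x_leJoin Λ hS.1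
  have hM'J : M' ∉ TorsJoin Λ A' := by
    intro h
    have hlt := hirr A' (Set.sdiff_singleton_ssubset.2 hMA')
    refine hlt.2 (x_joinLe Λ hJ fun S hS => ?_)
    by_cases hSe : S = FiltSet Λ (GenSet Λ M')
    · rw [hSe]; exact x_filtLe Λ hJ h
    · exact x_leJoin Λ ⟨hS, hSe⟩
  have hMJ : M ∈ TorsJoin Λ A' := x_leJoin Λ (A := A') (S := FiltSet Λ (GenSet Λ M)) ⟨hMA, hneT⟩ (x_self Λ M)
  have hM'T : M' ∈ TorsJoin Λ A := x_leJoin Λ hMA' (x_self Λ M')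
  let I := LinearMap.range f
  have hIJ : Mdl.of Λ I ∈ TorsJoin Λ A' :=
    hJ.factor_closed M hMJ (Mdl.of Λ I) ⟨f.rangeRestrict, f.surjective_rangeRestrict⟩
  let Q := Mdl.of Λ (M'.carrier ⧸ I)
  have hQfac : IsFactor Λ M' Q := ⟨I.mkQ, I.mkQ_surjective⟩
  have hQfin : Module.Finite Λ Q.carrier :=
    (x_finTors Λ).factor_closed M' (hE M' hM').1 Q hQfac
  let U := TorsJoin Λ {{Q}}
  have hU : IsTorsionClass Λ U := x_joinTors Λ _ (by
    rintro S rfl N rfl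
    exact hQfin)
  have hQU : Q ∈ U := x_leJoin Λ (A := {{Q}}) (S := {Q}) rfl rfl
  have hUT : U ⊆ TorsJoin Λ A := x_joinLe Λ hT (by
    rintro S rfl N rfl
    exact hT.factor_closed M' hM'T _ hQfac)
  have hM'U : M' ∉ U := by
    intro h
    have h1 : M' ∈ xU Λ Q := x_joinLe Λ (xU_tors Λ Q) (by
      rintro S rfl N rfl
      exact xU_self Λ hQfin) h
    obtain ⟨g, hg⟩ := xU_exists Λ h1 (hE M' hM').2.1
    let g' : (M'.carrier ⧸ I) →ₗ[Λ] M'.carrier := g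
    have hg' : g' ≠ 0 := hg
    have h2 : g'.comp I.mkQ ≠ 0 := by
      intro h0
      apply hg'
      ext x
      exact LinearMap.congr_fun h0 x
    have hinj := ((hE M' hM').2.2 _ h2).1
    apply hf
    ext x
    apply hinj
    have h3 : I.mkQ (f x) = 0 := (Submodule.Quotient.mk_eq_zero I).2 ⟨x, rfl⟩
    rw [LinearMap.comp_apply, h3]
    simp
  let B : Set (Set (Mdl Λ)) := {TorsJoin Λ A', U}
  have hBt : ∀ S ∈ B, IsTorsionClass Λ S := by
    rintro S (rfl | rfl)
    · exact hJ
    · exact hU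
  have hBj : IsTorsionClass Λ (TorsJoin Λ B) := x_joinTors Λ B fun S hS => (hBt S hS).fin
  have hM'B : M' ∈ TorsJoin Λ B := by
    refine hBj.ext_closed _ (x_leJoin Λ (Or.inl rfl) hIJ) Q (x_leJoin Λ (Or.inr rfl) hQU) M'
      ⟨I.subtype, I.mkQ, I.injective_subtype, I.mkQ_surjective, ?_⟩
    exact I.range_subtype.trans I.ker_mkQ.symm
  have hBA : TorsJoin Λ B = TorsJoin Λ A := by
    apply Set.Subset.antisymm
    · refine x_joinLe Λ hT ?_
      rintro S (rfl | rfl)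
      · exact hJT
      · exact hUT
    · refine x_joinLe Λ hBj fun S hS => ?_
      by_cases hSe : S = FiltSet Λ (GenSet Λ M')
      · rw [hSe]; exact x_filtLe Λ hBj hM'B
      · exact (x_leJoin Λ (A := A') ⟨hS, hSe⟩).trans (x_leJoin Λ (Or.inl rfl))
  have hBirr : TorsIrredundant Λ B := by
    intro C hC
    refine ⟨x_joinLe Λ hBj fun S hS => x_leJoin Λ (hC.1 hS), fun hle => ?_⟩
    have hmem := hle hM'B
    by_cases h1 : TorsJoin Λ A' ∈ C
    · by_cases h2 : U ∈ C
      · apply hC.2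
        rintro S (rfl | rfl)
        · exact h1
        · exact h2
      · refine hM'J (x_joinLe Λ hJ ?_ hmem)
        intro S hS
        rcases hC.1 hS with rfl | rfl
        · exact subset_rfl
        · exact absurd hS h2
    · refine hM'U (x_joinLe Λ hU ?_ hmem)
      intro S hS
      rcases hC.1 hS with rfl | rfl
      · exact absurd hS h1
      · exact subset_rfl
  obtain ⟨b, hb, hle⟩ := hcan B hBt hBA hBirr _ hMA'
  have hmem := hle (x_self Λ M')
  rcases hb with rfl | rfl
  · exact hM'J hmem
  · exact hM'U hmem

/-- Let `E` be a collection of (pairwise non-isomorphic) bricks over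
`Λ`.  If `{Filt(Gen(M)) : M ∈ E}` is a canonical join representation in `tors Λ`, then
every pair of distinct modules of `E` is hom-orthogonal. -/
theorem statement17 (k : Type) [Field k] (Λ : Type) [Ring Λ] [Algebra k Λ]
    [FiniteDimensional k Λ] (E : Set (Mdl Λ)) (hE : ∀ M ∈ E, IsBrick Λ M)
    (hnoniso : ∀ M ∈ E, ∀ M' ∈ E, M ≠ M' → ¬ MIso Λ M M')
    (hcjr : TorsCJR Λ ((fun M : Mdl Λ => FiltSet Λ (GenSet Λ M)) '' E)) :
    ∀ M ∈ E, ∀ M' ∈ E, M ≠ M' → HomOrthogonal Λ M M' := by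
  intro M hM M' hM' hne
  exact ⟨x_main Λ E hE hnoniso hcjr M hM M' hM' hne,
    x_main Λ E hE hnoniso hcjr M' hM' M hM hne.symm⟩
end
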